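/- Fix an integer p ≥ 2, θ ∈ S^{p-1}, f ∈ 𝓕, and let κ_n = τ_n p/√n, where the real sequence (τ_n) is bounded and does not converge to 0. Define the log-likelihood ratio Λ_n : (S^{p-1})^n → ℝ by Λ_n(x) := Σ_{i=1}^n log( (c_{p,κ_n,f}/c_p) f(κ_n (x_i'θ)²) ), the central sequence Δ_θ^{(n)}(x) := (p/√n) Σ_{i=1}^n ( (x_i'θ)² − 1/p ), and the Fisher information Γ_p := 2(p−1)/(p+2). Then Λ_n − τ_n Δ_θ^{(n)} + (τ_n²/2) Γ_p converges to 0 in P_0^{(n)}-probability, i.e., for every ε > 0, P_0^{(n)}( { x : |Λ_n(x) − τ_n Δ_θ^{(n)}(x) + (τ_n²/2) Γ_p| > ε } ) → 0 as n → ∞. -/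

import Mathlib

open MeasureTheory ProbabilityTheory Filter Matrix Real
open scoped ENNReal NNReal Topology

noncomputable section

/-- The normalizing constant `c_p = 1 / ∫_{-1}^1 (1-s²)^{(p-3)/2} ds`. -/
def c0 (p : ℕ) : ℝ := 1 / ∫ s in (-1:ℝ)..1, (1 - s ^ 2) ^ (((p : ℝ) - 3) / 2)

/-- The normalizing constant `c_{p,κ,f} = 1 / ∫_{-1}^1 (1-s²)^{(p-3)/2} f(κ s²) ds`. -/
def cKF (p : ℕ) (κ : ℝ) (f : ℝ → ℝ) : ℝ :=
  1 / ∫ s in (-1:ℝ)..1, (1 - s ^ 2) ^ (((p : ℝ) - 3) / 2) * f (κ * s ^ 2)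

/-- Second order Taylor expansion with Peano remainder, from twice differentiability at a point. -/
theorem isLittleO_taylor_two_of_hasDerivAt {φ φ' : ℝ → ℝ} {b : ℝ}
    (h1 : ∀ᶠ x in 𝓝 (0:ℝ), HasDerivAt φ (φ' x) x) (h2 : HasDerivAt φ' b 0) :
    (fun t => φ t - φ 0 - φ' 0 * t - b / 2 * t ^ 2) =o[𝓝 0] (fun t => t ^ 2) := by
  rw [Asymptotics.isLittleO_iff]
  intro c hc
  have h3 := (hasDerivAt_iff_isLittleO.1 h2)
  rw [Asymptotics.isLittleO_iff] at h3
  have h4 := (h3 hc).and h1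
  obtain ⟨δ, hδ, hball⟩ := Metric.eventually_nhds_iff.1 h4
  refine Metric.eventually_nhds_iff.2 ⟨δ, hδ, fun {t} ht => ?_⟩
  have hsub : ∀ x ∈ Metric.closedBall (0:ℝ) |t|, |x| ≤ |t| := fun x hx => by
    simpa [Real.dist_eq] using hx
  have hsub' : ∀ x ∈ Metric.closedBall (0:ℝ) |t|, dist x 0 < δ := fun x hx => by
    have := hsub x hx
    rw [Real.dist_eq, sub_zero] at ht ⊢
    linarith
  have key := (convex_closedBall (0:ℝ) |t|).norm_image_sub_le_of_norm_hasDerivWithin_le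
    (f := fun x => φ x - φ' 0 * x - b / 2 * x ^ 2)
    (f' := fun x => φ' x - φ' 0 - b * x) (C := c * |t|) (x := 0) (y := t)
    (fun x hx => by
      have h5 := ((hball (hsub' x hx)).2.sub ((hasDerivAt_id x).const_mul (φ' 0))).sub
        (((hasDerivAt_id x).pow 2).const_mul (b / 2))
      refine HasDerivAt.hasDerivWithinAt (h5.congr_deriv ?_)
      simp
      ring)
    (fun x hx => by
      have h6 := (hball (hsub' x hx)).1
      simp only [sub_zero, smul_eq_mul, Real.norm_eq_abs] at h6 ⊢
      rw [mul_comm b x]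
      exact h6.trans (mul_le_mul_of_nonneg_left (hsub x hx) hc.le))
    (by simp) (by simp)
  simp only [Real.norm_eq_abs, sub_zero] at key ⊢
  rw [abs_pow t 2, sq |t|, ← mul_assoc]
  refine le_trans (le_of_eq ?_) key
  congr 1
  ring

/-- The weight `(1 - s²)^{(p-3)/2}` is integrable on `[-1, 1]`. -/
theorem intervalIntegrable_one_sub_sq_rpow {p : ℕ} (hp : 2 ≤ p) :
    IntervalIntegrable (fun s : ℝ => (1 - s ^ 2) ^ (((p : ℝ) - 3) / 2)) volume (-1) 1 := by
  rcases hp.eq_or_lt with rfl | h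
  · refine intervalIntegral.intervalIntegrable_deriv_of_nonneg (g := Real.arcsin)
      Real.continuous_arcsin.continuousOn (fun x hx => ?_) (fun x hx => ?_)
    · norm_num at hx
      refine (Real.hasDerivAt_arcsin hx.1.ne' hx.2.ne).congr_deriv ?_
      rw [Real.sqrt_eq_rpow, one_div, ← Real.rpow_neg (by nlinarith)]
      norm_num
    · norm_num at hx
      exact Real.rpow_nonneg (by nlinarith) _
  · have h3 : (3:ℝ) ≤ p := by exact_mod_cast h
    refine Continuous.intervalIntegrable ?_ _ _
    exact (by fun_prop : Continuous fun s : ℝ => 1 - s ^ 2).rpow_const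
      (fun _ => Or.inr (by linarith))

theorem integral_one_sub_sq_rpow_pos {p : ℕ} (hp : 2 ≤ p) :
    0 < ∫ s in (-1:ℝ)..1, (1 - s ^ 2) ^ (((p : ℝ) - 3) / 2) :=
  intervalIntegral.intervalIntegral_pos_of_pos_on (intervalIntegrable_one_sub_sq_rpow hp)
    (fun x hx => Real.rpow_pos_of_pos (by nlinarith [hx.1, hx.2]) _) (by norm_num)

/-- Recursion for the even moments of the weight `(1 - s²)^{(p-3)/2}`. -/
theorem integral_one_sub_sq_rpow_mul_pow {p : ℕ} (hp : 2 ≤ p) (j : ℕ) :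
    ((2 * j + p : ℕ) : ℝ) *
        ∫ s in (-1:ℝ)..1, (1 - s ^ 2) ^ (((p : ℝ) - 3) / 2) * s ^ (2 * j + 2) =
      ((2 * j + 1 : ℕ) : ℝ) *
        ∫ s in (-1:ℝ)..1, (1 - s ^ 2) ^ (((p : ℝ) - 3) / 2) * s ^ (2 * j) := by
  have hp' : (2:ℝ) ≤ p := by exact_mod_cast hp
  have hw := intervalIntegrable_one_sub_sq_rpow hp
  have hi : ∀ m : ℕ, IntervalIntegrable
      (fun s : ℝ => (1 - s ^ 2) ^ (((p : ℝ) - 3) / 2) * s ^ m) volume (-1) 1 := fun m =>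
    hw.mul_continuousOn (by fun_prop)
  have hint := ((hi (2 * j)).const_mul ((2 * j + 1 : ℕ) : ℝ)).sub
    ((hi (2 * j + 2)).const_mul ((2 * j + p : ℕ) : ℝ))
  have key := intervalIntegral.integral_eq_sub_of_hasDerivAt_of_le (a := -1) (b := 1)
    (f := fun s : ℝ => s ^ (2 * j + 1) * (1 - s ^ 2) ^ (((p : ℝ) - 3) / 2 + 1)) (by norm_num)
    (ContinuousOn.mul (by fun_prop) (ContinuousOn.rpow_const (by fun_prop)
      (fun _ _ => Or.inr (by linarith))))
    (fun x hx => by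
      have hpos : 0 < 1 - x ^ 2 := by nlinarith [hx.1, hx.2]
      have h1 : HasDerivAt (fun s : ℝ => 1 - s ^ 2) (-(2 * x)) x := by
        simpa using ((hasDerivAt_id x).pow 2).const_sub 1
      have h2 := h1.rpow_const (p := ((p : ℝ) - 3) / 2 + 1) (Or.inl hpos.ne')
      have h3 := (hasDerivAt_pow (2 * j + 1) x).mul h2
      refine h3.congr_deriv ?_
      rw [add_sub_cancel_right, Real.rpow_add_one hpos.ne']
      rw [Nat.add_sub_cancel]
      push_cast
      ring) hint
  rw [intervalIntegral.integral_sub ((hi _).const_mul _) ((hi _).const_mul _),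
    intervalIntegral.integral_const_mul, intervalIntegral.integral_const_mul] at key
  have h0 : (0:ℝ) ^ (((p : ℝ) - 3) / 2 + 1) = 0 := Real.zero_rpow (by linarith)
  norm_num [h0] at key
  push_cast
  linarith

/-- Expansion of the ratio of normalizing constants. -/
theorem c0_div_cKF_isLittleO {p : ℕ} (hp : 2 ≤ p) {f : ℝ → ℝ} (hf : Monotone f) {a : ℝ}
    (h : (fun t => f t - 1 - t - a / 2 * t ^ 2) =o[𝓝 0] (fun t => t ^ 2)) :
    (fun k => c0 p / cKF p k f - 1 - k / p - a / 2 * (3 / (p * (p + 2))) * k ^ 2)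
      =o[𝓝 0] (fun k => k ^ 2) := by
  have hp' : (2:ℝ) ≤ p := by exact_mod_cast hp
  set w : ℝ → ℝ := fun s => (1 - s ^ 2) ^ (((p : ℝ) - 3) / 2) with hwdef
  have hw : IntervalIntegrable w volume (-1) 1 := intervalIntegrable_one_sub_sq_rpow hp
  set A := ∫ s in (-1:ℝ)..1, w s with hA
  have hApos : 0 < A := integral_one_sub_sq_rpow_pos hp
  have hA1 : ∫ s in (-1:ℝ)..1, w s * s ^ 2 = A / p := by
    have := integral_one_sub_sq_rpow_mul_pow hp 0
    simp only [mul_zero, zero_add, pow_zero, mul_one, Nat.cast_one, one_mul] at this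
    rw [eq_div_iff (by positivity), mul_comm]
    exact this
  have hA2 : ∫ s in (-1:ℝ)..1, w s * s ^ 4 = A * (3 / (p * (p + 2))) := by
    have := integral_one_sub_sq_rpow_mul_pow hp 1
    norm_num at this
    have h4 : (2 + (p:ℝ)) * ∫ s in (-1:ℝ)..1, w s * s ^ 4 = 3 * (A / p) := by
      rw [← hA1]; exact this
    field_simp
    field_simp at h4
    linarith
  have hi : ∀ m : ℕ, IntervalIntegrable (fun s : ℝ => w s * s ^ m) volume (-1) 1 := fun m =>
    hw.mul_continuousOn (by fun_prop)
  have hwf : ∀ k, IntervalIntegrable (fun s : ℝ => w s * f (k * s ^ 2)) volume (-1) 1 := by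
    intro k
    rw [intervalIntegrable_iff] at hw ⊢
    refine hw.mul_bdd (c := max |f (-|k|)| |f (|k|)|)
      (hf.measurable.comp (by fun_prop)).aestronglyMeasurable ?_
    refine (ae_restrict_iff' measurableSet_uIoc).2 (Eventually.of_forall fun s hs => ?_)
    rw [Set.uIoc_of_le (by norm_num)] at hs
    have hs2 : s ^ 2 ≤ 1 := by nlinarith [hs.1, hs.2]
    have hb : |k * s ^ 2| ≤ |k| := by
      rw [abs_mul, abs_of_nonneg (sq_nonneg s)]
      exact mul_le_of_le_one_right (abs_nonneg k) hs2
    exact abs_le_max_abs_abs (hf (abs_le.1 hb).1) (hf (abs_le.1 hb).2)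
  rw [Asymptotics.isLittleO_iff] at h ⊢
  intro c hc
  obtain ⟨δ, hδ, hball⟩ := Metric.eventually_nhds_iff.1 (h hc)
  refine Metric.eventually_nhds_iff.2 ⟨δ, hδ, fun {k} hk => ?_⟩
  rw [Real.dist_eq, sub_zero] at hk
  have hrep : c0 p / cKF p k f - 1 - k / p - a / 2 * (3 / (p * (p + 2))) * k ^ 2 =
      (∫ s in (-1:ℝ)..1, (w s * f (k * s ^ 2) - w s - k * (w s * s ^ 2)
        - (a / 2 * k ^ 2) * (w s * s ^ 4))) / A := by
    rw [intervalIntegral.integral_sub (((hwf k).sub hw).sub ((hi 2).const_mul _))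
        ((hi 4).const_mul _), intervalIntegral.integral_sub ((hwf k).sub hw) ((hi 2).const_mul _),
      intervalIntegral.integral_sub (hwf k) hw, intervalIntegral.integral_const_mul,
      intervalIntegral.integral_const_mul, hA1, hA2]
    simp only [c0, cKF, ← hA]
    change 1 / A / (1 / ∫ s in (-1:ℝ)..1, w s * f (k * s ^ 2)) - _ - _ - _ = _
    generalize (∫ s in (-1:ℝ)..1, w s * f (k * s ^ 2)) = I
    rw [div_div_eq_mul_div, div_one]
    field_simp
  rw [hrep, norm_div, Real.norm_eq_abs A, abs_of_pos hApos, div_le_iff₀ hApos]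
  have hle : ‖∫ s in (-1:ℝ)..1, (w s * f (k * s ^ 2) - w s - k * (w s * s ^ 2)
        - (a / 2 * k ^ 2) * (w s * s ^ 4))‖ ≤ ∫ s in (-1:ℝ)..1, (c * ‖k ^ 2‖) * w s := by
    refine intervalIntegral.norm_integral_le_of_norm_le (by norm_num)
      (Eventually.of_forall fun s hs => ?_) (hw.const_mul _)
    have hs2 : s ^ 2 ≤ 1 := by nlinarith [hs.1, hs.2]
    have hws : 0 ≤ w s := Real.rpow_nonneg (by linarith) _
    have hb : |k * s ^ 2| ≤ |k| := by
      rw [abs_mul, abs_of_nonneg (sq_nonneg s)]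
      exact mul_le_of_le_one_right (abs_nonneg k) hs2
    have h1 := hball (y := k * s ^ 2) (by rw [Real.dist_eq, sub_zero]; linarith)
    have h2 : ‖(k * s ^ 2) ^ 2‖ ≤ ‖k ^ 2‖ := by
      rw [norm_pow, norm_pow]
      exact pow_le_pow_left₀ (norm_nonneg _) hb 2
    have h3 : w s * f (k * s ^ 2) - w s - k * (w s * s ^ 2) - (a / 2 * k ^ 2) * (w s * s ^ 4)
        = w s * (f (k * s ^ 2) - 1 - k * s ^ 2 - a / 2 * (k * s ^ 2) ^ 2) := by ring
    rw [h3, norm_mul, Real.norm_eq_abs (w s), abs_of_nonneg hws, mul_comm]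
    exact mul_le_mul_of_nonneg_right
      (h1.trans (mul_le_mul_of_nonneg_left h2 hc.le)) hws
  rwa [intervalIntegral.integral_const_mul] at hle

theorem isLittleO_log_comp {f : ℝ → ℝ} {a : ℝ} (hf0 : f 0 = 1) (hf'0 : deriv f 0 = 1)
    (hf : ∀ᶠ x in 𝓝 (0:ℝ), DifferentiableAt ℝ f x) (hf2 : HasDerivAt (deriv f) a 0) :
    (fun t => Real.log (f t) - t - (a - 1) / 2 * t ^ 2) =o[𝓝 0] (fun t => t ^ 2) := by
  have hd := hf.self_of_nhds
  have hne : ∀ᶠ x in 𝓝 (0:ℝ), f x ≠ 0 :=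
    hd.continuousAt.eventually_ne (by rw [hf0]; exact one_ne_zero)
  have h := isLittleO_taylor_two_of_hasDerivAt (φ := fun t => Real.log (f t))
    (φ' := fun t => deriv f t / f t) (b := a - 1)
    (by
      filter_upwards [hf, hne] with x hx hx'
      exact hx.hasDerivAt.log hx')
    (by
      refine (hf2.div hd.hasDerivAt (by rw [hf0]; exact one_ne_zero)).congr_deriv ?_
      rw [hf0, hf'0]
      ring)
  simpa [hf0, hf'0] using h

theorem isLittleO_log_of_isLittleO {J : ℝ → ℝ} {m b : ℝ}
    (h : (fun k => J k - 1 - m * k - b * k ^ 2) =o[𝓝 0] (fun k => k ^ 2)) :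
    (fun k => Real.log (J k) - m * k - (b - m ^ 2 / 2) * k ^ 2) =o[𝓝 0] (fun k => k ^ 2) := by
  have hsq : (fun k : ℝ => k ^ 2) =o[𝓝 0] (fun k : ℝ => k) := by
    simpa using (Asymptotics.isLittleO_pow_pow (𝕜 := ℝ) (m := 1) (n := 2) (by norm_num))
  have h1 : (fun k => J k - 1 - m * k) =o[𝓝 0] (fun k : ℝ => k) := by
    refine ((h.trans hsq).add (hsq.const_mul_left b)).congr_left fun k => ?_
    ring
  have hk : (fun k : ℝ => m * k) =O[𝓝 0] (fun k : ℝ => k) :=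
    (Asymptotics.isBigO_refl _ _).const_mul_left m
  have h2 : (fun k => J k - 1) =O[𝓝 0] (fun k : ℝ => k) := by
    refine (h1.isBigO.add hk).congr_left fun k => ?_
    ring
  have ht : Tendsto (fun k => J k - 1) (𝓝 0) (𝓝 0) := h2.trans_tendsto tendsto_id
  have hlog := isLittleO_log_comp (f := fun y => 1 + y) (a := 0) (by simp) (by simp)
    (Eventually.of_forall fun x => by fun_prop) (by simpa using hasDerivAt_const (0:ℝ) (1:ℝ))
  have h3 := (hlog.comp_tendsto ht).trans_isBigO (h2.pow 2)
  have h4 : (fun k => (J k - 1 - m * k) * (J k - 1 + m * k)) =o[𝓝 0] (fun k : ℝ => k ^ 2) := by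
    simpa only [sq] using h1.mul_isBigO (h2.add hk)
  refine ((h3.add h).sub (h4.const_mul_left (1 / 2))).congr_left fun k => ?_
  simp only [Function.comp_apply, add_sub_cancel]
  ring

/-- Under a rotation-invariant law, the moments of `x ⬝ᵥ v` depend on `v` only through its
Euclidean norm. -/
theorem integral_dotProduct_pow_eq_of_rotation_invariant {p : ℕ} (U : Measure (Fin p → ℝ))
    (hUrot : ∀ O : Matrix (Fin p) (Fin p) ℝ, O * Oᵀ = 1 →
      Measure.map (fun x => O.mulVec x) U = U)
    {v w : Fin p → ℝ} (hvw : v ⬝ᵥ v = w ⬝ᵥ w) (m : ℕ) :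
    ∫ x, (x ⬝ᵥ v) ^ m ∂U = ∫ x, (x ⬝ᵥ w) ^ m ∂U := by
  by_cases hne : v = w
  · rw [hne]
  set u := v - w with hu
  have huu : u ⬝ᵥ u ≠ 0 := by
    rw [Ne, dotProduct_self_eq_zero, hu, sub_eq_zero]
    exact hne
  set O : Matrix (Fin p) (Fin p) ℝ := 1 - (2 / (u ⬝ᵥ u)) • vecMulVec u u with hO
  have hOt : Oᵀ = O := by
    simp [hO, transpose_vecMulVec]
  have hOO : O * Oᵀ = 1 := by
    rw [hOt, hO, sub_mul, mul_sub, mul_sub, smul_mul_smul_comm, vecMulVec_mul_vecMulVec]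
    simp only [mul_one, one_mul, vecMulVec_smul, smul_smul]
    have : 2 / (u ⬝ᵥ u) * (2 / (u ⬝ᵥ u)) * (u ⬝ᵥ u) = 2 / (u ⬝ᵥ u) + 2 / (u ⬝ᵥ u) := by
      field_simp
      norm_num
    rw [this, add_smul]
    abel
  have hOx : ∀ x, (O *ᵥ x) ⬝ᵥ v = x ⬝ᵥ w := by
    intro x
    have huv : 2 * (u ⬝ᵥ v) = u ⬝ᵥ u := by
      rw [hu]
      simp only [sub_dotProduct, dotProduct_sub, dotProduct_comm w v]
      linarith
    have h1 : O *ᵥ x = x - ((2 / (u ⬝ᵥ u)) * (u ⬝ᵥ x)) • u := by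
      rw [hO, sub_mulVec, one_mulVec, smul_mulVec, vecMulVec_mulVec, op_smul_eq_smul,
        smul_smul]
    have h2 : x ⬝ᵥ w = x ⬝ᵥ v - x ⬝ᵥ u := by
      rw [hu, dotProduct_sub]
      ring
    rw [h1, sub_dotProduct, smul_dotProduct, smul_eq_mul, h2, dotProduct_comm u x]
    have : 2 / (u ⬝ᵥ u) * (u ⬝ᵥ v) = 1 := by
      rw [div_mul_eq_mul_div, huv, div_self huu]
    linear_combination (-(x ⬝ᵥ u)) * this
  conv_lhs => rw [← hUrot O hOO]
  rw [integral_map (by fun_prop) (by fun_prop)]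
  simp only [hOx]

/-- Fourth moment of the projection on a unit vector under a rotation-invariant law on the sphere. -/
theorem integral_dotProduct_pow_four {p : ℕ} (hp : 2 ≤ p)
    (U : Measure (Fin p → ℝ)) [IsProbabilityMeasure U]
    (hUsphere : ∀ᵐ x ∂U, ∑ a, x a ^ 2 = 1)
    (hUrot : ∀ O : Matrix (Fin p) (Fin p) ℝ, O * Oᵀ = 1 →
      Measure.map (fun x => O.mulVec x) U = U)
    {θ : Fin p → ℝ} (hθ : θ ⬝ᵥ θ = 1) :
    ∫ x, (x ⬝ᵥ θ) ^ 4 ∂U = 3 / (p * (p + 2)) := by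
  have hp' : (2:ℝ) ≤ p := by exact_mod_cast hp
  set m := ∫ x, (x ⬝ᵥ θ) ^ 4 ∂U with hm
  have hle : ∀ᵐ x ∂U, ∀ i, |x i| ≤ 1 := by
    filter_upwards [hUsphere] with x hx i
    rw [← sq_le_one_iff_abs_le_one, ← hx]
    exact Finset.single_le_sum (f := fun a => x a ^ 2) (fun a _ => sq_nonneg _) (Finset.mem_univ i)
  have hint : ∀ i j, Integrable (fun x : Fin p → ℝ => x i ^ 2 * x j ^ 2) U := by
    intro i j
    refine Integrable.of_bound (C := 1) (by fun_prop) ?_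
    filter_upwards [hle] with x hx
    rw [norm_mul, norm_pow, norm_pow]
    exact mul_le_one₀ (pow_le_one₀ (norm_nonneg _) (hx i)) (by positivity)
      (pow_le_one₀ (norm_nonneg _) (hx j))
  have hint' : ∀ v : Fin p → ℝ, Integrable (fun x : Fin p → ℝ => (x ⬝ᵥ v) ^ 4) U := by
    intro v
    refine Integrable.of_bound (C := (∑ i, |v i|) ^ 4) (by fun_prop) ?_
    filter_upwards [hle] with x hx
    rw [norm_pow]
    refine pow_le_pow_left₀ (norm_nonneg _) ?_ 4
    refine (Finset.abs_sum_le_sum_abs _ _).trans (Finset.sum_le_sum fun i _ => ?_)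
    rw [abs_mul]
    exact mul_le_of_le_one_left (abs_nonneg _) (hx i)
  have hscale : ∀ (c : ℝ) (v : Fin p → ℝ), v ⬝ᵥ v = c ^ 2 →
      ∫ x, (x ⬝ᵥ v) ^ 4 ∂U = c ^ 4 * m := by
    intro c v hv
    rw [integral_dotProduct_pow_eq_of_rotation_invariant U hUrot (w := c • θ)
      (by simp [hv, hθ, sq]), hm, ← integral_const_mul]
    simp only [dotProduct_smul, smul_eq_mul, mul_pow]
  have hdiag : ∀ i, ∫ x, x i ^ 2 * x i ^ 2 ∂U = m := by
    intro i
    have := hscale 1 (Pi.single i 1) (by simp)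
    simp only [dotProduct_single, mul_one, one_pow, one_mul] at this
    rw [← this]
    congr 1 with x
    ring
  have hoff : ∀ i j, i ≠ j → ∫ x, x i ^ 2 * x j ^ 2 ∂U = m / 3 := by
    intro i j hij
    have h2 : (√2) ^ 4 = (4:ℝ) := by
      rw [show (√2) ^ 4 = ((√2) ^ 2) ^ 2 by ring, Real.sq_sqrt (by norm_num)]
      norm_num
    have h1 := hscale (√2) (Pi.single i 1 + Pi.single j 1) (by
      simp [dotProduct_add, hij, hij.symm]
      norm_num)
    have h3 := hscale (√2) (Pi.single i 1 - Pi.single j 1) (by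
      simp [dotProduct_sub, hij, hij.symm]
      norm_num)
    have h4 : ∫ x : Fin p → ℝ, ((x ⬝ᵥ (Pi.single i 1 + Pi.single j 1)) ^ 4 +
        (x ⬝ᵥ (Pi.single i 1 - Pi.single j 1)) ^ 4) ∂U =
        ∫ x : Fin p → ℝ, (2 * (x i ^ 2 * x i ^ 2) + 12 * (x i ^ 2 * x j ^ 2)
          + 2 * (x j ^ 2 * x j ^ 2)) ∂U := by
      congr 1 with x
      simp only [dotProduct_add, dotProduct_sub, dotProduct_single, mul_one]
      ring
    rw [integral_add (hint' _) (hint' _), h1, h3, h2,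
      integral_add (by exact ((hint i i).const_mul _).add ((hint i j).const_mul _))
        ((hint j j).const_mul _), integral_add ((hint i i).const_mul _)
      ((hint i j).const_mul _), integral_const_mul, integral_const_mul, integral_const_mul,
      hdiag, hdiag] at h4
    linarith
  have htot : ∑ i, ∑ j, ∫ x, x i ^ 2 * x j ^ 2 ∂U = 1 := by
    have h1 : ∫ x, (∑ a, x a ^ 2) * (∑ a, x a ^ 2) ∂U = 1 := by
      rw [integral_congr_ae (g := fun _ => (1:ℝ))]
      · simp
      · filter_upwards [hUsphere] with x hx
        rw [hx, one_mul]
    simp only [Finset.sum_mul_sum] at h1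
    rw [integral_finsetSum _ fun i _ => integrable_finsetSum _ fun j _ => hint i j] at h1
    rw [← h1]
    exact Finset.sum_congr rfl fun i _ => (integral_finsetSum _ fun j _ => hint i j).symm
  have hval : ∀ i j, ∫ x, x i ^ 2 * x j ^ 2 ∂U = m / 3 + if i = j then 2 * m / 3 else 0 := by
    intro i j
    split_ifs with h
    · rw [h, hdiag]
      ring
    · rw [hoff i j h, add_zero]
  simp only [hval, Finset.sum_add_distrib, Finset.sum_const, Finset.card_univ, Fintype.card_fin,
    Finset.sum_ite_eq, Finset.mem_univ, if_true, nsmul_eq_mul] at htot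
  rw [eq_div_iff (by positivity)]
  linear_combination 3 * htot

/-- Weak law of large numbers for square-integrable functions on product spaces. -/
theorem tendsto_pi_abs_sum_ge {X : Type*} [MeasurableSpace X] (U : Measure X)
    [IsProbabilityMeasure U] {Y : X → ℝ} (hY : MemLp Y 2 U) (hY0 : ∫ x, Y x ∂U = 0)
    {δ : ℝ} (hδ : 0 < δ) :
    Tendsto (fun n : ℕ => Measure.pi (fun _ : Fin n => U) {x | n * δ ≤ |∑ i, Y (x i)|})
      atTop (𝓝 0) := by
  have hlim : Tendsto (fun n : ℕ => ENNReal.ofReal (Var[Y; U] / δ ^ 2 * (1 / (n : ℝ))))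
      atTop (𝓝 0) := by
    have := ENNReal.tendsto_ofReal
      ((tendsto_one_div_atTop_nhds_zero_nat (𝕜 := ℝ)).const_mul (Var[Y; U] / δ ^ 2))
    simpa using this
  refine tendsto_of_tendsto_of_tendsto_of_le_of_le' tendsto_const_nhds hlim
    (Eventually.of_forall fun _ => zero_le) ?_
  filter_upwards [eventually_ge_atTop 1] with n hn
  have hn' : (0:ℝ) < n := by exact_mod_cast hn
  have hmem : ∀ i : Fin n, MemLp (fun x : Fin n → X => Y (x i)) 2 (Measure.pi fun _ => U) :=
    fun i => hY.comp_measurePreserving (measurePreserving_eval _ i)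
  have hsum := memLp_finsetSum' Finset.univ fun i _ => hmem i
  have h := meas_ge_le_variance_div_sq hsum (c := n * δ) (by positivity)
  rw [variance_sum_pi fun _ => hY] at h
  have hmean : ∫ x : Fin n → X, ∑ i, Y (x i) ∂(Measure.pi fun _ => U) = 0 := by
    rw [integral_finsetSum _ fun i _ => (hmem i).integrable (by norm_num)]
    refine Finset.sum_eq_zero fun i _ => ?_
    rw [integral_comp_eval (μ := fun _ : Fin n => U) hY.aestronglyMeasurable, hY0]
  simp only [Finset.sum_apply, Finset.sum_const, Finset.card_univ,
    Fintype.card_fin, nsmul_eq_mul] at h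
  simp only [hmean, sub_zero] at h
  refine h.trans (le_of_eq ?_)
  congr 1
  field_simp

/-- LAN stochastic expansion, Theorem 3.1.
With `κ_n = τ_n p / √n`, `(τ_n)` bounded and not converging to `0`, the log-likelihood ratio
`Λ_n` satisfies `Λ_n - τ_n Δ_θ^{(n)} + (τ_n²/2) Γ_p → 0` in `P_0^{(n)}`-probability, where
`Δ_θ^{(n)}(x) = (p/√n) Σ_i ((x_i'θ)² - 1/p)` and `Γ_p = 2(p-1)/(p+2)`. -/
theorem LAN_expansion_specified_location
    (p : ℕ) (hp : 2 ≤ p)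
    (U : Measure (Fin p → ℝ)) [IsProbabilityMeasure U]
    (hUsphere : U {x : Fin p → ℝ | ∑ a, x a ^ 2 = 1}ᶜ = 0)
    (hUrot : ∀ O : Matrix (Fin p) (Fin p) ℝ, O * Oᵀ = 1 →
      Measure.map (fun x => O.mulVec x) U = U)
    (θ : Fin p → ℝ) (hθ : ∑ a, θ a ^ 2 = 1)
    (f : ℝ → ℝ) (hf_pos : ∀ x, 0 < f x) (hf_mono : Monotone f)
    (hf_diff : ∀ᶠ x in 𝓝 (0:ℝ), DifferentiableAt ℝ f x)
    (hf_diff2 : DifferentiableAt ℝ (deriv f) 0)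
    (hf0 : f 0 = 1) (hf'0 : deriv f 0 = 1)
    (τ : ℕ → ℝ) (hτ_bdd : ∃ C : ℝ, ∀ n, |τ n| ≤ C)
    (hτ_not0 : ¬ Tendsto τ atTop (𝓝 (0:ℝ)))
    (κ : ℕ → ℝ) (hκ : ∀ n, κ n = τ n * p / Real.sqrt n)
    -- log-likelihood ratio
    (Λ : ∀ n : ℕ, (Fin n → (Fin p → ℝ)) → ℝ)
    (hΛ : ∀ n x, Λ n x =
      ∑ i, Real.log ((cKF p (κ n) f / c0 p) * f (κ n * (∑ a, x i a * θ a) ^ 2)))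
    -- central sequence
    (Δ : ∀ n : ℕ, (Fin n → (Fin p → ℝ)) → ℝ)
    (hΔ : ∀ n x, Δ n x =
      ((p : ℝ) / Real.sqrt n) * ∑ i, ((∑ a, x i a * θ a) ^ 2 - 1 / (p : ℝ))) :
    ∀ ε > (0:ℝ),
      Tendsto (fun n => Measure.pi (fun _ : Fin n => U)
          {x | ε < |Λ n x - τ n * Δ n x + (τ n) ^ 2 / 2 * (2 * ((p:ℝ) - 1) / ((p:ℝ) + 2))|})
        atTop (𝓝 (0 : ℝ≥0∞)) := by
  obtain ⟨C, hC⟩ := hτ_bdd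
  have hC0 : 0 ≤ C := (abs_nonneg _).trans (hC 0)
  have hp' : (2:ℝ) ≤ p := by exact_mod_cast hp
  intro ε hε
  set a := deriv (deriv f) 0 with ha
  have hf2 : HasDerivAt (deriv f) a 0 := hf_diff2.hasDerivAt
  have hfexp : (fun t => f t - 1 - t - a / 2 * t ^ 2) =o[𝓝 0] (fun t => t ^ 2) := by
    simpa [hf0, hf'0] using isLittleO_taylor_two_of_hasDerivAt
      (hf_diff.mono fun x hx => hx.hasDerivAt) hf2
  have hgexp := isLittleO_log_comp hf0 hf'0 hf_diff hf2
  have hJexp := c0_div_cKF_isLittleO hp hf_mono hfexp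
  have hlogJ := isLittleO_log_of_isLittleO (J := fun k => c0 p / cKF p k f) (m := 1 / p)
    (b := a / 2 * (3 / (p * (p + 2)))) (hJexp.congr_left fun k => by ring)
  have hκ0 : Tendsto κ atTop (𝓝 0) := by
    have h1 : Tendsto (fun n : ℕ => (C * p) * (1 / √(n : ℝ))) atTop (𝓝 0) := by
      have : Tendsto (fun n : ℕ => 1 / √(n : ℝ)) atTop (𝓝 0) := by
        simp only [one_div]
        exact tendsto_inv_atTop_zero.comp (tendsto_sqrt_atTop.comp tendsto_natCast_atTop_atTop)
      simpa using this.const_mul (C * p)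
    refine squeeze_zero_norm (fun n => ?_) h1
    rw [hκ, norm_div, norm_mul, Real.norm_eq_abs, Real.norm_eq_abs, Real.norm_eq_abs,
      abs_of_nonneg (by positivity : (0:ℝ) ≤ p), abs_of_nonneg (Real.sqrt_nonneg _),
      div_eq_mul_one_div]
    gcongr
    exact hC n
  set η := ε / (4 * (C ^ 2 * p ^ 2 + 1)) with hη
  have hηpos : 0 < η := by positivity
  set δ := ε / (|a - 1| * (C ^ 2 * p ^ 2) + 1) with hδ
  have hδpos : 0 < δ := by positivity
  have hJ1 : ∀ᶠ k in 𝓝 (0:ℝ), c0 p / cKF p k f ≠ 0 := by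
    have h1 : Tendsto (fun k : ℝ => c0 p / cKF p k f) (𝓝 0) (𝓝 1) := by
      have h2 : Tendsto (fun k : ℝ => k ^ 2) (𝓝 0) (𝓝 0) := by
        simpa using (continuous_pow (M := ℝ) 2).tendsto 0
      have h3 := hJexp.trans_tendsto h2
      have h4 : Tendsto (fun k : ℝ => 1 + k / p + a / 2 * (3 / (p * (p + 2))) * k ^ 2) (𝓝 0)
          (𝓝 1) := by
        have : Continuous fun k : ℝ => 1 + k / p + a / 2 * (3 / (p * (p + 2))) * k ^ 2 := by
          fun_prop
        simpa using this.tendsto 0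
      have h5 := h3.add h4
      rw [zero_add] at h5
      refine h5.congr fun k => ?_
      ring
    exact h1.eventually_ne one_ne_zero
  obtain ⟨ρ, hρ, hgball⟩ := Metric.eventually_nhds_iff.1 (hgexp.def hηpos)
  have hκρ : ∀ᶠ n in atTop, |κ n| < ρ := by
    have := hκ0 (Metric.ball_mem_nhds 0 hρ)
    filter_upwards [this] with n hn
    simpa [Real.dist_eq] using hn
  have hsph : ∀ᵐ x ∂U, ∑ a, x a ^ 2 = 1 := hUsphere
  have hw1 : ∀ x : Fin p → ℝ, ∑ a, x a ^ 2 = 1 → (x ⬝ᵥ θ) ^ 2 ≤ 1 := fun x hx => by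
    have := Finset.sum_mul_sq_le_sq_mul_sq Finset.univ x θ
    rwa [hx, hθ, one_mul] at this
  set Y : (Fin p → ℝ) → ℝ := fun x => (x ⬝ᵥ θ) ^ 4 - 3 / (p * (p + 2)) with hYdef
  have hbdd : ∀ᵐ x ∂U, ‖(x ⬝ᵥ θ) ^ 4‖ ≤ 1 := by
    filter_upwards [hsph] with x hx
    rw [show (x ⬝ᵥ θ) ^ 4 = ((x ⬝ᵥ θ) ^ 2) ^ 2 by ring, norm_pow, norm_pow, Real.norm_eq_abs,
      sq_abs]
    exact pow_le_one₀ (sq_nonneg _) (hw1 x hx)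
  have hmem4 : MemLp (fun x : Fin p → ℝ => (x ⬝ᵥ θ) ^ 4) 2 U :=
    MemLp.of_bound (by fun_prop) 1 hbdd
  have hYmem : MemLp Y 2 U := hmem4.sub (memLp_const _)
  have hθ' : θ ⬝ᵥ θ = 1 := by
    rw [← hθ]
    simp only [dotProduct, sq]
  have hY0 : ∫ x, Y x ∂U = 0 := by
    rw [hYdef, integral_sub (hmem4.integrable (by norm_num)) (integrable_const _),
      integral_dotProduct_pow_four hp U hsph hUrot hθ']
    simp
  refine tendsto_of_tendsto_of_tendsto_of_le_of_le' tendsto_const_nhds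
    (tendsto_pi_abs_sum_ge U hYmem hY0 hδpos) (Eventually.of_forall fun _ => zero_le) ?_
  filter_upwards [eventually_ge_atTop 1, hκρ, hκ0.eventually hJ1,
    hκ0.eventually (hlogJ.def hηpos)] with n hn hκn hJn hlogJn
  have hn' : (0:ℝ) < n := by exact_mod_cast hn
  have hae : ∀ᵐ x ∂(Measure.pi fun _ : Fin n => U), ∀ i, ∑ a, x i a ^ 2 = 1 :=
    eventually_all.2 fun i =>
      (Measure.tendsto_eval_ae_ae (μ := fun _ : Fin n => U) (i := i)).eventually hsph
  refine measure_mono_ae ?_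
  filter_upwards [hae] with x hx hlt
  by_contra hnot
  have hnot' : |∑ i, Y (x i)| < n * δ := not_le.1 hnot
  have hlt' : ε < |Λ n x - τ n * Δ n x + (τ n) ^ 2 / 2 * (2 * ((p:ℝ) - 1) / ((p:ℝ) + 2))| := hlt
  set k := κ n with hk
  have hnk : n * k ^ 2 = τ n ^ 2 * p ^ 2 := by
    rw [hk, hκ, div_pow, Real.sq_sqrt hn'.le]
    field_simp
  have hnk_le : n * k ^ 2 ≤ C ^ 2 * p ^ 2 := by
    rw [hnk]
    exact mul_le_mul_of_nonneg_right (sq_le_sq' (abs_le.1 (hC n)).1 (abs_le.1 (hC n)).2)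
      (sq_nonneg _)
  set r : Fin n → ℝ := fun i => Real.log (f (k * (x i ⬝ᵥ θ) ^ 2)) - k * (x i ⬝ᵥ θ) ^ 2
    - (a - 1) / 2 * (k * (x i ⬝ᵥ θ) ^ 2) ^ 2 with hr
  have hr_le : ∀ i, |r i| ≤ η * k ^ 2 := by
    intro i
    have h1 := hw1 _ (hx i)
    have h0 := sq_nonneg (x i ⬝ᵥ θ)
    have hb : |k * (x i ⬝ᵥ θ) ^ 2| ≤ |k| := by
      rw [abs_mul, abs_of_nonneg h0]
      exact mul_le_of_le_one_right (abs_nonneg k) h1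
    have h2 := hgball (y := k * (x i ⬝ᵥ θ) ^ 2) (by rw [Real.dist_eq, sub_zero]; linarith)
    refine h2.trans (mul_le_mul_of_nonneg_left ?_ hηpos.le)
    rw [norm_pow, Real.norm_eq_abs, ← sq_abs k]
    exact pow_le_pow_left₀ (abs_nonneg _) hb 2
  set s := Real.log (c0 p / cKF p k f) - 1 / p * k
    - (a / 2 * (3 / (p * (p + 2))) - (1 / p) ^ 2 / 2) * k ^ 2 with hs
  have hs_le : |s| ≤ η * k ^ 2 := by
    have h1 := hlogJn
    rw [norm_pow, Real.norm_eq_abs k, sq_abs] at h1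
    exact h1
  have hΛ' : Λ n x = ∑ i, (r i + k * (x i ⬝ᵥ θ) ^ 2 + (a - 1) / 2 * k ^ 2 * Y (x i)
      + (a - 1) / 2 * k ^ 2 * (3 / (p * (p + 2))) - Real.log (c0 p / cKF p k f)) := by
    rw [hΛ]
    refine Finset.sum_congr rfl fun i _ => ?_
    change Real.log (cKF p k f / c0 p * f (k * (x i ⬝ᵥ θ) ^ 2)) = _
    rw [← inv_div, Real.log_mul (inv_ne_zero hJn) (hf_pos _).ne', Real.log_inv]
    simp only [hr, hYdef]
    ring
  have hΔ' : τ n * Δ n x = k * ∑ i, (x i ⬝ᵥ θ) ^ 2 - n * (1 / p * k) := by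
    rw [hΔ, Finset.sum_sub_distrib, hk, hκ]
    simp only [Finset.sum_const, Finset.card_univ, Fintype.card_fin, nsmul_eq_mul, dotProduct]
    ring
  have hfinal : Λ n x - τ n * Δ n x + (τ n) ^ 2 / 2 * (2 * ((p:ℝ) - 1) / ((p:ℝ) + 2)) =
      ∑ i, r i - n * s + (a - 1) / 2 * k ^ 2 * ∑ i, Y (x i) := by
    have hτ : (τ n) ^ 2 / 2 * (2 * ((p:ℝ) - 1) / ((p:ℝ) + 2)) =
        n * k ^ 2 * (3 / (p * (p + 2)) - (1 / p) ^ 2) / 2 := by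
      rw [hnk]
      field_simp
      ring
    rw [hΛ', hΔ', hτ, hs]
    simp only [Finset.sum_sub_distrib, Finset.sum_add_distrib, ← Finset.mul_sum, Finset.sum_const,
      Finset.card_univ, Fintype.card_fin, nsmul_eq_mul]
    ring
  have hsum_r : |∑ i, r i| ≤ n * (η * k ^ 2) := by
    refine (Finset.abs_sum_le_sum_abs _ _).trans ((Finset.sum_le_sum fun i _ => hr_le i).trans ?_)
    simp
  have hns : |n * s| ≤ n * (η * k ^ 2) := by
    rw [abs_mul, abs_of_pos hn']
    gcongr
  have hYs : |(a - 1) / 2 * k ^ 2 * ∑ i, Y (x i)| ≤ |a - 1| * (C ^ 2 * p ^ 2) * δ / 2 := by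
    rw [abs_mul, abs_mul, abs_div, abs_two, abs_of_nonneg (sq_nonneg k)]
    calc |a - 1| / 2 * k ^ 2 * |∑ i, Y (x i)| ≤ |a - 1| / 2 * k ^ 2 * (n * δ) := by gcongr
      _ = |a - 1| * (n * k ^ 2) * δ / 2 := by ring
      _ ≤ _ := by gcongr
  have hδ1 : |a - 1| * (C ^ 2 * p ^ 2) * δ ≤ ε := by
    have : (|a - 1| * (C ^ 2 * p ^ 2) + 1) * δ = ε := by
      rw [hδ]
      field_simp
    linarith
  have hη1 : 4 * (n * (η * k ^ 2)) ≤ ε := by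
    have h1 : 4 * (C ^ 2 * p ^ 2 + 1) * η = ε := by
      rw [hη]
      field_simp
    have h2 : η * (n * k ^ 2) ≤ η * (C ^ 2 * p ^ 2) := by gcongr
    linarith
  rw [hfinal] at hlt'
  have h1 := abs_add_le (∑ i, r i - n * s) ((a - 1) / 2 * k ^ 2 * ∑ i, Y (x i))
  have h2 := abs_sub (∑ i, r i) (n * s)
  linarith

end
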